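/- arXiv:2104.12251 — 2 statements merged into one kernel-verified Lean document; each statement's English description precedes it below -/
import Mathlib

section
/- Let n ∈ {2,3}, μ > 0 and λ ∈ ℝ with ν := λ + 2μ > 0. Then there exists a constant C = C(n,μ,λ) such that every smooth compactly supported vector field u : ℝⁿ → ℝⁿ satisfies ‖u‖_{L^∞} ≤ C ‖u‖_{L²}^{1−n/4} ‖𝓛u‖_{L²}^{n/4}. -/
open MeasureTheory
open scoped ENNReal NNReal

noncomputable section

/-- Euclidean space `ℝⁿ`. -/
abbrev En (n : ℕ) := EuclideanSpace ℝ (Fin n)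

/-- Partial derivative `∂ᵢ f` of a scalar function on `ℝⁿ`. -/
def pdv {n : ℕ} (i : Fin n) (f : En n → ℝ) (x : En n) : ℝ :=
  fderiv ℝ f x (EuclideanSpace.single i 1)

/-- The Lamé operator `𝓛u = μΔu + (λ+μ)∇(div u)` acting on vector fields. -/
def lame {n : ℕ} (μ lam : ℝ) (u : En n → En n) (x : En n) : En n :=
  (EuclideanSpace.equiv (Fin n) ℝ).symm fun i =>
    μ * (∑ j, pdv j (fun y => pdv j (fun z => u z i) y) x)
      + (lam + μ) * pdv i (fun y => ∑ j, pdv j (fun z => u z j) y) x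

section Interpolation

open Filter Topology

/-- Optimizing `K s^{-n/2} (A + s² B)` over the scale `s > 0`. -/
theorem le_interpolation_of_forall_scale {n : ℕ} (hn : 0 < n) (hn4 : n < 4) {K : ℝ≥0}
    {X : ℝ≥0∞} (A B : ℝ≥0)
    (h : ∀ s : ℝ≥0, 0 < s →
      X ≤ K * (s : ℝ≥0∞) ^ (-(n : ℝ) / 2) * (A + (s : ℝ≥0∞) ^ 2 * B)) :
    X ≤ 2 * K * (A : ℝ≥0∞) ^ ((1 : ℝ) - n / 4) * (B : ℝ≥0∞) ^ ((n : ℝ) / 4) := by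
  have hn' : (0 : ℝ) < n := by exact_mod_cast hn
  have hn4' : (n : ℝ) < 4 := by exact_mod_cast hn4
  have key : ∀ a b : ℝ≥0, A ≤ a → B ≤ b → 0 < a → 0 < b →
      X ≤ ((2 * K * a ^ ((1 : ℝ) - n / 4) * b ^ ((n : ℝ) / 4) : ℝ≥0) : ℝ≥0∞) := by
    intro a b hAa hBb ha hb
    set s : ℝ≥0 := (a / b) ^ ((1 : ℝ) / 2) with hs
    have hs0 : 0 < s := NNReal.rpow_pos (div_pos ha hb)
    have hs2 : s ^ 2 = a / b := by
      rw [hs, ← NNReal.rpow_natCast, ← NNReal.rpow_mul]; norm_num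
    have hsn : s ^ (-(n : ℝ) / 2) = a ^ (-(n : ℝ) / 4) * b ^ ((n : ℝ) / 4) := by
      rw [hs, ← NNReal.rpow_mul, NNReal.div_rpow, div_eq_mul_inv, ← NNReal.rpow_neg]
      congr 2 <;> ring
    have hexp : a ^ ((1 : ℝ) - n / 4) = a * a ^ (-(n : ℝ) / 4) := by
      rw [sub_eq_add_neg, NNReal.rpow_add ha.ne', NNReal.rpow_one, neg_div]
    refine (h s hs0).trans ?_
    rw [← ENNReal.coe_rpow_of_ne_zero hs0.ne']
    rw [← ENNReal.coe_pow, ← ENNReal.coe_mul, ← ENNReal.coe_mul, ← ENNReal.coe_add,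
      ← ENNReal.coe_mul, ENNReal.coe_le_coe]
    calc K * s ^ (-(n : ℝ) / 2) * (A + s ^ 2 * B)
        ≤ K * s ^ (-(n : ℝ) / 2) * (a + s ^ 2 * b) := by gcongr
      _ = 2 * K * a ^ ((1 : ℝ) - n / 4) * b ^ ((n : ℝ) / 4) := by
        rw [hs2, div_mul_cancel₀ _ hb.ne', hsn, hexp]; ring
  have hlim : Tendsto (fun ε : ℝ≥0 =>
      ((2 * K * (A + ε) ^ ((1 : ℝ) - n / 4) * (B + ε) ^ ((n : ℝ) / 4) : ℝ≥0) : ℝ≥0∞))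
      (𝓝[>] 0) (𝓝 ((2 * K * A ^ ((1 : ℝ) - n / 4) * B ^ ((n : ℝ) / 4) : ℝ≥0) : ℝ≥0∞)) := by
    have hc : Continuous fun ε : ℝ≥0 =>
        ((2 * K * (A + ε) ^ ((1 : ℝ) - n / 4) * (B + ε) ^ ((n : ℝ) / 4) : ℝ≥0) : ℝ≥0∞) := by
      refine ENNReal.continuous_coe.comp (Continuous.mul (continuous_const.mul ?_) ?_)
      · exact (NNReal.continuous_rpow_const (by linarith)).comp (continuous_const.add continuous_id)
      · exact (NNReal.continuous_rpow_const (by positivity)).comp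
          (continuous_const.add continuous_id)
    simpa using (hc.tendsto 0).mono_left nhdsWithin_le_nhds
  rw [← ENNReal.coe_rpow_of_nonneg _ (by linarith), ← ENNReal.coe_rpow_of_nonneg _ (by positivity)]
  refine le_of_le_of_eq (ge_of_tendsto hlim ?_) (by push_cast; rfl)
  filter_upwards [self_mem_nhdsWithin] with ε hε
  have hε : 0 < ε := hε
  exact key _ _ (by simp) (by simp) (by positivity) (by positivity)

/-- Cauchy–Schwarz against the weight `(1 + s²|ξ|²)⁻¹`. -/
theorem exists_eLpNorm_one_le_scale {n : ℕ} (hn4 : n < 4) :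
    ∃ K : ℝ≥0, ∀ (f : En n → ℂ) (g : En n → ℝ), AEStronglyMeasurable f volume →
      AEStronglyMeasurable g volume → (∀ ξ, ‖ξ‖ ^ 2 * ‖f ξ‖ ≤ g ξ) → ∀ s : ℝ≥0, 0 < s →
      eLpNorm f 1 volume ≤ K * (s : ℝ≥0∞) ^ (-(n : ℝ) / 2) *
        (eLpNorm f 2 volume + (s : ℝ≥0∞) ^ 2 * eLpNorm g 2 volume) := by
  set w : En n → ℝ := fun ξ => (1 + ‖ξ‖ ^ 2)⁻¹ with hw
  have hwc : Continuous w :=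
    Continuous.inv₀ (by fun_prop) fun ξ => by positivity
  have hwm : MemLp w 2 volume := by
    rw [memLp_two_iff_integrable_sq hwc.aestronglyMeasurable]
    have := integrable_rpow_neg_one_add_norm_sq (E := En n) (μ := volume) (r := 4)
      (by simpa using hn4)
    refine this.congr (.of_forall fun ξ => ?_)
    simp only [hw]
    rw [show (-4 / 2 : ℝ) = -((2 : ℕ) : ℝ) by norm_num, Real.rpow_neg (by positivity),
      Real.rpow_natCast, inv_pow]
  refine ⟨(eLpNorm w 2 volume).toNNReal, fun f g hf hg hfg s hs => ?_⟩
  rw [ENNReal.coe_toNNReal hwm.2.ne]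
  have hs' : (0 : ℝ) < s := hs
  set ws : En n → ℝ := fun ξ => w ((s : ℝ) • ξ) with hws
  have hwsc : Continuous ws := hwc.comp (by fun_prop)
  have hscale : eLpNorm ws 2 volume = eLpNorm w 2 volume * (s : ℝ≥0∞) ^ (-(n : ℝ) / 2) := by
    have h1 := eLpNorm_map_measure (μ := (volume : Measure (En n))) (p := 2) (g := w)
      (f := fun ξ : En n => (s : ℝ) • ξ) hwc.aestronglyMeasurable (by fun_prop)
    rw [Measure.map_addHaar_smul _ hs'.ne',
      eLpNorm_smul_measure_of_ne_top ENNReal.ofNat_ne_top] at h1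
    change _ = eLpNorm ws 2 volume at h1
    rw [← h1, smul_eq_mul, mul_comm]
    congr 1
    have h2 : ENNReal.ofReal |((s : ℝ) ^ Module.finrank ℝ (En n))⁻¹| =
        (s : ℝ≥0∞) ^ (-(n : ℝ)) := by
      rw [abs_of_nonneg (by positivity), finrank_euclideanSpace_fin, ENNReal.rpow_neg,
        ENNReal.rpow_natCast, ENNReal.ofReal_inv_of_pos (by positivity),
        ENNReal.ofReal_pow hs'.le, ENNReal.ofReal_coe_nnreal]
    rw [h2, ← ENNReal.rpow_mul]
    congr 1
    simp [div_eq_mul_inv]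
  set F : En n → ℂ := fun ξ => (1 + ‖(s : ℝ) • ξ‖ ^ 2) • f ξ with hF
  have hFm : AEStronglyMeasurable F volume :=
    (Continuous.aestronglyMeasurable (f := fun ξ : En n => 1 + ‖(s : ℝ) • ξ‖ ^ 2)
      (by fun_prop)).smul hf
  have hfF : f = ws • F := by
    ext ξ
    simp only [hws, hw, hF, Pi.smul_apply']
    rw [smul_smul, inv_mul_cancel₀ (by positivity), one_smul]
  have hFle : eLpNorm F 2 volume ≤
      eLpNorm f 2 volume + (s : ℝ≥0∞) ^ 2 * eLpNorm g 2 volume := by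
    calc eLpNorm F 2 volume
        ≤ eLpNorm ((fun ξ => ‖f ξ‖) + ((s : ℝ) ^ 2) • g) 2 volume := by
          refine eLpNorm_mono_real fun ξ => ?_
          simp only [hF, norm_smul, Pi.add_apply, Pi.smul_apply, smul_eq_mul]
          rw [Real.norm_of_nonneg (by positivity), Real.norm_of_nonneg hs'.le, mul_pow, add_mul,
            one_mul, mul_assoc]
          gcongr
          exact hfg ξ
      _ ≤ eLpNorm (fun ξ => ‖f ξ‖) 2 volume + eLpNorm (((s : ℝ) ^ 2) • g) 2 volume :=
          eLpNorm_add_le hf.norm (hg.const_smul _) (by norm_num)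
      _ = _ := by
          rw [eLpNorm_norm, eLpNorm_const_smul]
          congr 2
          rw [Real.enorm_of_nonneg (by positivity), ENNReal.ofReal_pow hs'.le,
            ENNReal.ofReal_coe_nnreal]
  calc eLpNorm f 1 volume = eLpNorm (ws • F) 1 volume := by rw [← hfF]
    _ ≤ eLpNorm ws 2 volume * eLpNorm F 2 volume :=
        eLpNorm_smul_le_mul_eLpNorm hFm hwsc.aestronglyMeasurable
    _ ≤ _ := by rw [hscale]; gcongr

end Interpolation

section Symbol

/-- The symbol of the Lamé operator is elliptic: it controls `|ξ|² |z|`. -/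
theorem norm_sq_mul_le_sum_lame_symbol {n : ℕ} {μ lam : ℝ} (hμ : 0 < μ)
    (hν : 0 < lam + 2 * μ) {P : ℝ} (hP : 0 < P) (ξ : En n) (z w : Fin n → ℂ)
    (hw : ∀ i, w i = -P * (μ * ((‖ξ‖ ^ 2 : ℝ) * z i) + (lam + μ) * (ξ i * ∑ j, ξ j * z j)))
    (i : Fin n) :
    ‖ξ‖ ^ 2 * ‖z i‖ ≤ (1 + |lam + μ| / (lam + 2 * μ)) / (μ * P) * ∑ j, ‖w j‖ := by
  set S := ∑ j, ‖w j‖ with hS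
  have hS0 : 0 ≤ S := Finset.sum_nonneg fun _ _ => norm_nonneg _
  rcases eq_or_ne ξ 0 with rfl | hξ
  · simp only [norm_zero]
    have := abs_nonneg (lam + μ)
    have : 0 ≤ (1 + |lam + μ| / (lam + 2 * μ)) / (μ * P) * S := by positivity
    simpa using this
  have hξ0 : 0 < ‖ξ‖ := norm_pos_iff.2 hξ
  set D : ℂ := ∑ j, ξ j * z j with hD
  have hsq : ∑ j, (ξ j : ℂ) * ξ j = (‖ξ‖ ^ 2 : ℝ) := by
    rw [EuclideanSpace.real_norm_sq_eq]
    push_cast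
    exact Finset.sum_congr rfl fun j _ => by ring
  have hdot : ∑ j, (ξ j : ℂ) * w j = -(P * (lam + 2 * μ) * ‖ξ‖ ^ 2 : ℝ) * D := by
    calc ∑ j, (ξ j : ℂ) * w j
        = -P * (μ * (‖ξ‖ ^ 2 : ℝ) * ∑ j, ξ j * z j
            + (lam + μ) * D * ∑ j, (ξ j : ℂ) * ξ j) := by
          rw [Finset.mul_sum, Finset.mul_sum, ← Finset.sum_add_distrib, Finset.mul_sum]
          refine Finset.sum_congr rfl fun j _ => ?_
          rw [hw j]; ring
      _ = _ := by rw [hsq, ← hD]; push_cast; ring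
  have hcoord : ∀ j, |ξ j| ≤ ‖ξ‖ := fun j => by
    simpa using PiLp.norm_apply_le ξ j
  have hdotle : ‖∑ j, (ξ j : ℂ) * w j‖ ≤ ‖ξ‖ * S := by
    refine (norm_sum_le _ _).trans ?_
    rw [hS, Finset.mul_sum]
    refine Finset.sum_le_sum fun j _ => ?_
    rw [norm_mul, Complex.norm_real, Real.norm_eq_abs]
    gcongr
    exact hcoord j
  have hDle : P * (‖ξ‖ * ‖D‖) ≤ S / (lam + 2 * μ) := by
    rw [hdot, norm_mul, norm_neg, Complex.norm_real, Real.norm_of_nonneg (by positivity)] at hdotle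
    rw [le_div_iff₀ hν]
    refine le_of_mul_le_mul_left ?_ hξ0
    linarith
  have hzi : ((μ * P * ‖ξ‖ ^ 2 : ℝ) : ℂ) * z i = -w i - (P * (lam + μ) * ξ i : ℝ) * D := by
    rw [hw i]; push_cast; ring
  have hwi : ‖w i‖ ≤ S := Finset.single_le_sum (f := fun j => ‖w j‖)
    (fun _ _ => norm_nonneg _) (Finset.mem_univ i)
  have hmain : μ * P * ‖ξ‖ ^ 2 * ‖z i‖ ≤ S + |lam + μ| * (S / (lam + 2 * μ)) := by
    calc μ * P * ‖ξ‖ ^ 2 * ‖z i‖ = ‖((μ * P * ‖ξ‖ ^ 2 : ℝ) : ℂ) * z i‖ := by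
          rw [norm_mul, Complex.norm_real, Real.norm_of_nonneg (by positivity)]
      _ ≤ ‖w i‖ + ‖((P * (lam + μ) * ξ i : ℝ) : ℂ) * D‖ := by
          rw [hzi]; exact (norm_sub_le _ _).trans (by rw [norm_neg])
      _ = ‖w i‖ + |lam + μ| * (P * (|ξ i| * ‖D‖)) := by
          rw [norm_mul, Complex.norm_real, Real.norm_eq_abs, abs_mul, abs_mul, abs_of_pos hP]; ring
      _ ≤ S + |lam + μ| * (P * (‖ξ‖ * ‖D‖)) := by gcongr; exact hcoord i
      _ ≤ _ := by gcongr
  rw [div_mul_eq_mul_div, le_div_iff₀ (by positivity)]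
  calc _ = μ * P * ‖ξ‖ ^ 2 * ‖z i‖ := by ring
    _ ≤ _ := hmain
    _ = _ := by ring

end Symbol

section Fourier

open scoped SchwartzMap FourierTransform LineDeriv Real

theorem SchwartzMap.eLpNorm_two_fourier {n : ℕ} (f : 𝓢(En n, ℂ)) :
    eLpNorm (𝓕 f : 𝓢(En n, ℂ)) 2 volume = eLpNorm f 2 volume := by
  rw [← ENNReal.toReal_eq_toReal_iff' ((𝓕 f : 𝓢(En n, ℂ)).memLp 2 volume).eLpNorm_ne_top
    (f.memLp 2 volume).eLpNorm_ne_top,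
    ← SchwartzMap.norm_toLp, ← SchwartzMap.norm_toLp, SchwartzMap.norm_fourier_toL2_eq]

theorem SchwartzMap.enorm_apply_le_eLpNorm_one_fourier {n : ℕ} (f : 𝓢(En n, ℂ)) (x : En n) :
    ‖f x‖ₑ ≤ eLpNorm (𝓕 f : 𝓢(En n, ℂ)) 1 volume := by
  have h : f x = 𝓕 (𝓕 f : 𝓢(En n, ℂ)) (-x) := by
    conv_lhs => rw [← FourierPair.fourierInv_fourier_eq (F := 𝓢(En n, ℂ)) f]
    rw [SchwartzMap.fourierInv_coe, Real.fourierInv_eq_fourier_neg, ← SchwartzMap.fourier_coe]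
  rw [h, ← ofReal_norm, ← ENNReal.ofReal_toReal ((𝓕 f : 𝓢(En n, ℂ)).memLp 1 volume).eLpNorm_ne_top,
    ← SchwartzMap.norm_toLp]
  exact ENNReal.ofReal_le_ofReal (SchwartzMap.norm_fourier_apply_le_toLp_one _ _)

theorem SchwartzMap.fourier_lineDerivOp_single {n : ℕ} (f : 𝓢(En n, ℂ)) (i : Fin n) (ξ : En n) :
    𝓕 (∂_{(EuclideanSpace.single i 1 : En n)} f) ξ = 2 * π * Complex.I * (ξ i * 𝓕 f ξ) := by
  have : (fun x : En n => inner ℝ x (EuclideanSpace.single i 1)).HasTemperateGrowth := by fun_prop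
  rw [SchwartzMap.fourier_lineDerivOp_eq, smul_apply,
    SchwartzMap.smulLeftCLM_apply_apply this]
  simp [EuclideanSpace.inner_single_right]

/-- Partial derivatives of a real function agree with those of a complex Schwartz function which
it represents. -/
theorem SchwartzMap.lineDerivOp_eq_pdv {n : ℕ} {f : 𝓢(En n, ℂ)} {g : En n → ℝ}
    (h : ∀ x, f x = g x) (i : Fin n) (x : En n) :
    ∂_{(EuclideanSpace.single i 1 : En n)} f x = pdv i g x := by
  have hg : g = fun y => (f y).re := by ext y; simp [h y]
  have hgd : DifferentiableAt ℝ g x := by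
    rw [hg]; exact Complex.reCLM.differentiableAt.comp x f.differentiableAt
  have hf : (f : En n → ℂ) = Complex.ofRealCLM ∘ g := by ext y; simp [h y]
  rw [SchwartzMap.lineDerivOp_apply_eq_fderiv, pdv, hf,
    fderiv_comp x Complex.ofRealCLM.differentiableAt hgd]
  simp

/-- The Lamé operator on families of complex Schwartz functions. -/
def schwartzLame {n : ℕ} (μ lam : ℝ) (f : Fin n → 𝓢(En n, ℂ)) (i : Fin n) : 𝓢(En n, ℂ) :=
  (μ : ℂ) • ∑ j, ∂_{(EuclideanSpace.single j 1 : En n)}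
      (∂_{(EuclideanSpace.single j 1 : En n)} (f i))
    + ((lam + μ : ℝ) : ℂ) • ∂_{(EuclideanSpace.single i 1 : En n)}
        (∑ j, ∂_{(EuclideanSpace.single j 1 : En n)} (f j))

theorem schwartzLame_apply {n : ℕ} (μ lam : ℝ) {f : Fin n → 𝓢(En n, ℂ)} {u : En n → En n}
    (h : ∀ i x, f i x = (u x i : ℝ)) (i : Fin n) (x : En n) :
    schwartzLame μ lam f i x = (lame μ lam u x i : ℝ) := by
  have hdiv : ∀ y, (∑ j, ∂_{(EuclideanSpace.single j 1 : En n)} (f j)) y =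
      ((∑ j, pdv j (fun z => u z j) y : ℝ) : ℂ) := fun y => by
    rw [sum_apply]
    push_cast
    exact Finset.sum_congr rfl fun j _ => SchwartzMap.lineDerivOp_eq_pdv (h j) j y
  have hlap : ∀ j, ∂_{(EuclideanSpace.single j 1 : En n)}
      (∂_{(EuclideanSpace.single j 1 : En n)} (f i)) x =
        pdv j (fun y => pdv j (fun z => u z i) y) x := fun j =>
    SchwartzMap.lineDerivOp_eq_pdv (SchwartzMap.lineDerivOp_eq_pdv (h i) j) j x
  simp only [schwartzLame, add_apply, smul_apply, sum_apply,
    hlap, SchwartzMap.lineDerivOp_eq_pdv hdiv]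
  simp [lame]

theorem fourier_schwartzLame {n : ℕ} (μ lam : ℝ) (f : Fin n → 𝓢(En n, ℂ)) (i : Fin n) (ξ : En n) :
    𝓕 (schwartzLame μ lam f i) ξ = -((4 * π ^ 2 : ℝ) : ℂ) * (μ * ((‖ξ‖ ^ 2 : ℝ) * 𝓕 (f i) ξ)
      + (lam + μ) * (ξ i * ∑ j, ξ j * 𝓕 (f j) ξ)) := by
  have hsum : ∀ g : Fin n → 𝓢(En n, ℂ), 𝓕 (∑ j, g j) ξ = ∑ j, 𝓕 (g j) ξ := fun g => by
    rw [← SchwartzMap.fourierTransformCLM_apply (𝕜 := ℂ), map_sum, sum_apply]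
    rfl
  rw [schwartzLame, FourierTransform.fourier_add, FourierTransform.fourier_smul,
    FourierTransform.fourier_smul]
  simp only [add_apply, smul_apply, hsum,
    SchwartzMap.fourier_lineDerivOp_single, smul_eq_mul]
  rw [EuclideanSpace.real_norm_sq_eq]
  push_cast
  have hI : Complex.I ^ 2 = -1 := Complex.I_sq
  rw [← Finset.mul_sum, ← Finset.mul_sum, Finset.sum_mul]
  have : ∀ j, (ξ j : ℂ) * (2 * π * Complex.I * (ξ j * 𝓕 (f i) ξ)) =
      2 * π * Complex.I * ((ξ j : ℂ) ^ 2 * 𝓕 (f i) ξ) := fun j => by ring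
  simp only [this]
  rw [← Finset.mul_sum]
  linear_combination 4 * (π : ℂ) ^ 2 * (μ * (∑ j, (ξ j : ℂ) ^ 2 * 𝓕 (f i) ξ)
      + (lam + μ) * (ξ i * ∑ j, ξ j * 𝓕 (f j) ξ)) * hI

end Fourier

section Lame

open scoped SchwartzMap FourierTransform LineDeriv Real

/-- Interpolation inequality for each component of a smooth compactly supported field. -/
theorem exists_enorm_component_le_lame {n : ℕ} (hn : 0 < n) (hn4 : n < 4) {μ lam : ℝ}
    (hμ : 0 < μ) (hν : 0 < lam + 2 * μ) :
    ∃ C : ℝ≥0, ∀ u : En n → En n, ContDiff ℝ (⊤ : ℕ∞) u → HasCompactSupport u → ∀ i x,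
      ‖u x i‖ₑ ≤ C * (eLpNorm u 2 volume) ^ ((1 : ℝ) - n / 4) *
          (eLpNorm (lame μ lam u) 2 volume) ^ ((n : ℝ) / 4) := by
  obtain ⟨K, hK⟩ := exists_eLpNorm_one_le_scale (n := n) hn4
  have hP : (0 : ℝ) < 4 * π ^ 2 := by positivity
  set c : ℝ := (1 + |lam + μ| / (lam + 2 * μ)) / (μ * (4 * π ^ 2)) with hc
  have hc0 : 0 ≤ c := by positivity
  have hn0 : (0 : ℝ) ≤ n / 4 := by positivity
  have hn1 : (0 : ℝ) ≤ 1 - n / 4 := by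
    have : (n : ℝ) < 4 := by exact_mod_cast hn4
    linarith
  set c' : ℝ≥0 := c.toNNReal * n with hc'
  refine ⟨2 * K * c' ^ ((n : ℝ) / 4), fun u hu hsupp i x => ?_⟩
  have hcomp : ∀ i, ContDiff ℝ (⊤ : ℕ∞) fun x => ((u x i : ℝ) : ℂ) := fun i =>
    Complex.ofRealCLM.contDiff.comp ((EuclideanSpace.proj (𝕜 := ℝ) i).contDiff.comp hu)
  have hcompsupp : ∀ i, HasCompactSupport fun x => ((u x i : ℝ) : ℂ) := fun i =>
    hsupp.comp_left (g := fun y : En n => ((y i : ℝ) : ℂ)) (by simp)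
  set f : Fin n → 𝓢(En n, ℂ) := fun i => (hcompsupp i).toSchwartzMap (hcomp i) with hf
  have hfu : ∀ i x, f i x = (u x i : ℝ) := fun i x => rfl
  set W := schwartzLame μ lam f with hW
  have hWle : ∀ j, eLpNorm (W j) 2 volume ≤ eLpNorm (lame μ lam u) 2 volume := fun j => by
    refine eLpNorm_mono fun x => ?_
    rw [hW, schwartzLame_apply μ lam hfu, Complex.norm_real]
    exact PiLp.norm_apply_le _ j
  have hfle : eLpNorm (f i) 2 volume ≤ eLpNorm u 2 volume := by
    refine eLpNorm_mono fun x => ?_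
    rw [hfu, Complex.norm_real]
    exact PiLp.norm_apply_le _ i
  set g : En n → ℝ := c • ∑ j, fun ξ => ‖𝓕 (W j) ξ‖ with hg
  have hgm : AEStronglyMeasurable g volume := by
    refine (Finset.aestronglyMeasurable_sum _ fun j _ => ?_).const_smul c
    exact (𝓕 (W j) : 𝓢(En n, ℂ)).continuous.norm.aestronglyMeasurable
  have hpt : ∀ ξ, ‖ξ‖ ^ 2 * ‖𝓕 (f i) ξ‖ ≤ g ξ := fun ξ => by
    simpa [hg] using norm_sq_mul_le_sum_lame_symbol hμ hν hP ξ (fun j => 𝓕 (f j) ξ)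
      (fun j => 𝓕 (W j) ξ) (fun j => fourier_schwartzLame μ lam f j ξ) i
  have hgle' : eLpNorm g 2 volume ≤ c.toNNReal * ∑ j, eLpNorm (W j) 2 volume := by
    rw [hg, eLpNorm_const_smul, Real.enorm_of_nonneg hc0]
    refine mul_le_mul_right ?_ _
    refine (eLpNorm_sum_le (fun j _ => (𝓕 (W j) : 𝓢(En n, ℂ)).continuous.norm.aestronglyMeasurable)
      (by norm_num)).trans (Finset.sum_le_sum fun j _ => ?_)
    rw [eLpNorm_norm, SchwartzMap.eLpNorm_two_fourier]
  have hgle : eLpNorm g 2 volume ≤ c' * eLpNorm (lame μ lam u) 2 volume := by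
    refine hgle'.trans ?_
    rw [hc', ENNReal.coe_mul, mul_assoc]
    gcongr
    refine (Finset.sum_le_sum fun j _ => hWle j).trans ?_
    simp
  have hgfin : eLpNorm g 2 volume ≠ ⊤ := by
    refine ne_top_of_le_ne_top (ENNReal.mul_ne_top ENNReal.coe_ne_top ?_) hgle'
    exact (ENNReal.sum_lt_top.2 fun j _ => ((W j).memLp 2 volume).eLpNorm_lt_top).ne
  have hffin : eLpNorm (f i) 2 volume ≠ ⊤ := ((f i).memLp 2 volume).eLpNorm_ne_top
  have hX := le_interpolation_of_forall_scale (K := K) (X := eLpNorm (𝓕 (f i) : 𝓢(En n, ℂ)) 1 volume)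
    hn hn4 (eLpNorm (f i) 2 volume).toNNReal (eLpNorm g 2 volume).toNNReal fun s hs => by
      rw [ENNReal.coe_toNNReal hffin, ENNReal.coe_toNNReal hgfin,
        ← SchwartzMap.eLpNorm_two_fourier]
      exact hK _ g (𝓕 (f i) : 𝓢(En n, ℂ)).continuous.aestronglyMeasurable hgm hpt s hs
  rw [ENNReal.coe_toNNReal hffin, ENNReal.coe_toNNReal hgfin] at hX
  calc ‖u x i‖ₑ = ‖f i x‖ₑ := by rw [hfu, ← ofReal_norm, ← ofReal_norm, Complex.norm_real]
    _ ≤ eLpNorm (𝓕 (f i) : 𝓢(En n, ℂ)) 1 volume := SchwartzMap.enorm_apply_le_eLpNorm_one_fourier _ _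
    _ ≤ _ := hX
    _ ≤ 2 * K * eLpNorm u 2 volume ^ ((1 : ℝ) - n / 4) *
          (c' * eLpNorm (lame μ lam u) 2 volume) ^ ((n : ℝ) / 4) := by gcongr
    _ = _ := by
      rw [ENNReal.mul_rpow_of_nonneg _ _ hn0, ENNReal.coe_mul (2 * K), ENNReal.coe_mul 2,
        ENNReal.coe_rpow_of_nonneg _ hn0, ENNReal.coe_ofNat]
      ring

end Lame

/-- Gagliardo–Nirenberg type inequality: for `n ∈ {2,3}` there is `C = C(n,μ,λ)` such
that every smooth compactly supported vector field `u` satisfies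
`‖u‖_{L^∞} ≤ C ‖u‖_{L²}^{1−n/4} ‖𝓛u‖_{L²}^{n/4}`. -/
theorem linfty_interpolation_lame (n : ℕ) (hn : n = 2 ∨ n = 3) (μ lam : ℝ)
    (hμ : 0 < μ) (hν : 0 < lam + 2 * μ) :
    ∃ C : ℝ≥0, ∀ u : En n → En n, ContDiff ℝ (⊤ : ℕ∞) u → HasCompactSupport u →
      eLpNorm u ⊤ volume ≤
        C * (eLpNorm u 2 volume) ^ ((1 : ℝ) - n / 4) *
          (eLpNorm (lame μ lam u) 2 volume) ^ ((n : ℝ) / 4) := by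
  obtain ⟨C, hC⟩ := exists_enorm_component_le_lame (n := n) (by omega) (by omega) hμ hν
  refine ⟨n * C, fun u hu hsupp => ?_⟩
  rw [eLpNorm_exponent_top]
  refine eLpNormEssSup_le_of_ae_enorm_bound (.of_forall fun x => ?_)
  have hsum : ‖u x‖ₑ ≤ ∑ i, ‖u x i‖ₑ := by
    have h : u x = ∑ i, EuclideanSpace.single i (u x i) := by
      ext j; simp [Finset.sum_apply]
    calc ‖u x‖ₑ = ‖∑ i, EuclideanSpace.single i (u x i)‖ₑ := by rw [← h]
      _ ≤ ∑ i, ‖EuclideanSpace.single i (u x i)‖ₑ := enorm_sum_le _ _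
      _ = _ := Finset.sum_congr rfl fun i _ => by
        rw [← ofReal_norm, PiLp.norm_single, ofReal_norm]
  refine hsum.trans ((Finset.sum_le_sum fun i _ => hC u hu hsupp i x).trans_eq ?_)
  simp [mul_assoc]
end
end

section
/- Let (X,‖·‖) be a real Banach space. Let A, with domain D(A) ⊆ X, generate a bounded analytic semigroup (T_A(t))_{t≥0} such that ‖T_A(t)x‖ → 0 as t → ∞ for every x ∈ X. Let B : X → X be a continuous linear bijection with continuous inverse B⁻¹. Assume that the composite operator S := B∘A, with domain D(A), generates a bounded analytic semigroup (T_S(t))_{t≥0} such that ‖T_S(t)x‖ → 0 as t → ∞ for every x ∈ X. Then for every s ∈ (0,1) and q ∈ [1,∞] there exist constants c, C > 0, independent of x, such that for every x ∈ X: c · ‖ t ↦ tˢ‖T_A(t)(B⁻¹x)‖ ‖_{L^q((0,∞), dt/t)} ≤ ‖ t ↦ tˢ‖T_S(t)x‖ ‖_{L^q((0,∞), dt/t)} ≤ C · ‖ t ↦ tˢ‖T_A(t)(B⁻¹x)‖ ‖_{L^q((0,∞), dt/t)}. -/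
open MeasureTheory
open scoped ENNReal NNReal

noncomputable section

variable {X : Type*} [NormedAddCommGroup X] [NormedSpace ℝ X] [CompleteSpace X]

/-- `S`, a linear operator defined on the subspace `D ⊆ X`, generates the bounded
analytic semigroup `(T(t))_{t≥0}` with constants `M, C₀`. -/
structure IsBAS (D : Set X) (S : X → X) (T : ℝ → X →L[ℝ] X) (M C₀ : ℝ) : Prop where
  zero_mem : (0 : X) ∈ D
  add_mem : ∀ x ∈ D, ∀ y ∈ D, x + y ∈ D
  smul_mem : ∀ (c : ℝ), ∀ x ∈ D, c • x ∈ D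
  map_add : ∀ x ∈ D, ∀ y ∈ D, S (x + y) = S x + S y
  map_smul : ∀ (c : ℝ), ∀ x ∈ D, S (c • x) = c • S x
  T_zero : T 0 = ContinuousLinearMap.id ℝ X
  T_semigroup : ∀ t : ℝ, 0 ≤ t → ∀ s : ℝ, 0 ≤ s → T (t + s) = (T t).comp (T s)
  T_cont : ∀ x : X, ContinuousOn (fun t : ℝ => T t x) (Set.Ici 0)
  T_bdd : ∀ t : ℝ, 0 ≤ t → ∀ x : X, ‖T t x‖ ≤ M * ‖x‖
  T_mem : ∀ x ∈ D, ∀ t : ℝ, 0 ≤ t → T t x ∈ D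
  T_comm : ∀ x ∈ D, ∀ t : ℝ, 0 ≤ t → S (T t x) = T t (S x)
  T_deriv : ∀ x ∈ D, ∀ t : ℝ, 0 ≤ t →
    HasDerivWithinAt (fun τ : ℝ => T τ x) (T t (S x)) (Set.Ici 0) t
  analytic_mem : ∀ x : X, ∀ t : ℝ, 0 < t → T t x ∈ D
  analytic_bdd : ∀ x : X, ∀ t : ℝ, 0 < t → t * ‖S (T t x)‖ ≤ C₀ * ‖x‖

/-- The (extended-real-valued) seminorm `‖x‖_{Ḃˢ} = ∫₀^∞ t^{−s/2}‖S(T(t)x)‖ dt`. -/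
def BsNorm (S : X → X) (T : ℝ → X →L[ℝ] X) (s : ℝ) (x : X) : ℝ≥0∞ :=
  ∫⁻ t in Set.Ioi (0 : ℝ), ENNReal.ofReal (t ^ (-s / 2) * ‖S (T t x)‖)

/-- The (extended-real-valued) seminorm `‖x‖_{Ḃ⁻ˢ} = ∫₀^∞ t^{s/2−1}‖T(t)x‖ dt`. -/
def BnegNorm (T : ℝ → X →L[ℝ] X) (s : ℝ) (x : X) : ℝ≥0∞ :=
  ∫⁻ t in Set.Ioi (0 : ℝ), ENNReal.ofReal (t ^ (s / 2 - 1) * ‖T t x‖)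


/-- The measure `dt/t` on `(0,∞)`. -/
def mulHaar : Measure ℝ :=
  (volume.restrict (Set.Ioi (0 : ℝ))).withDensity fun t => ENNReal.ofReal t⁻¹

/-- **Schur test**: a nonnegative kernel whose row and column integrals are bounded by `c` defines
an operator of norm at most `c` on every `L^q`, `1 ≤ q ≤ ∞`. -/
theorem eLpNorm_le_of_kernel_bound {α E F : Type*} [MeasurableSpace α]
    [NormedAddCommGroup E] [NormedAddCommGroup F] {μ : Measure α} [SFinite μ]
    {k : α → α → ℝ≥0∞} (hk : Measurable (Function.uncurry k)) {c : ℝ≥0∞}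
    (hrow : ∀ᵐ t ∂μ, ∫⁻ r, k t r ∂μ ≤ c) (hcol : ∀ᵐ r ∂μ, ∫⁻ t, k t r ∂μ ≤ c)
    {f : α → E} {g : α → F} (hg : AEStronglyMeasurable g μ)
    (hfg : ∀ᵐ t ∂μ, ‖f t‖ₑ ≤ ∫⁻ r, k t r * ‖g r‖ₑ ∂μ) {q : ℝ≥0∞} (hq : 1 ≤ q) :
    eLpNorm f q μ ≤ c * eLpNorm g q μ := by
  have hk_row (t : α) : Measurable (k t) := hk.comp measurable_prodMk_left
  have hk_col (r : α) : Measurable fun t => k t r := hk.comp measurable_prodMk_right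
  rcases eq_or_ne q ∞ with rfl | hqtop
  · rw [eLpNorm_exponent_top, eLpNorm_exponent_top]
    refine essSup_le_of_ae_le _ ?_
    filter_upwards [hrow, hfg] with t ht hft
    calc ‖f t‖ₑ ≤ ∫⁻ r, k t r * ‖g r‖ₑ ∂μ := hft
      _ ≤ ∫⁻ r, k t r * eLpNormEssSup g μ ∂μ := by
        refine lintegral_mono_ae ?_
        filter_upwards [enorm_ae_le_eLpNormEssSup g μ] with r hr
        gcongr
      _ = (∫⁻ r, k t r ∂μ) * eLpNormEssSup g μ := lintegral_mul_const _ (hk_row t)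
      _ ≤ c * eLpNormEssSup g μ := by gcongr
  have hq0 : q ≠ 0 := (zero_lt_one.trans_le hq).ne'
  set p : ℝ := q.toReal with hp
  have hp1 : 1 ≤ p := by
    rw [hp, ← ENNReal.toReal_one]
    exact ENNReal.toReal_mono hqtop hq
  have hp0 : 0 < p := zero_lt_one.trans_le hp1
  have hinv : 0 ≤ 1 - 1 / p := by
    rw [sub_nonneg, div_le_one hp0]
    exact hp1
  have hholder : ∀ᵐ t ∂μ, ‖f t‖ₑ ^ p ≤ c ^ (p - 1) * ∫⁻ r, k t r * ‖g r‖ₑ ^ p ∂μ := by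
    filter_upwards [hrow, hfg] with t ht hft
    have hsplit (r : α) :
        k t r * ‖g r‖ₑ = k t r ^ (1 - 1 / p) * (k t r * ‖g r‖ₑ ^ p) ^ (1 / p) := by
      rw [ENNReal.mul_rpow_of_nonneg _ _ (by positivity), ← ENNReal.rpow_mul, mul_one_div_cancel
        hp0.ne', ENNReal.rpow_one, ← mul_assoc, ← ENNReal.rpow_add_of_nonneg _ _ hinv
        (by positivity), sub_add_cancel, ENNReal.rpow_one]
    calc ‖f t‖ₑ ^ p
        ≤ (∫⁻ r, k t r ^ (1 - 1 / p) * (k t r * ‖g r‖ₑ ^ p) ^ (1 / p) ∂μ) ^ p := by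
          simp_rw [← hsplit]
          gcongr
      _ ≤ ((∫⁻ r, k t r ∂μ) ^ (1 - 1 / p) * (∫⁻ r, k t r * ‖g r‖ₑ ^ p ∂μ) ^ (1 / p)) ^ p := by
          gcongr
          exact ENNReal.lintegral_mul_norm_pow_le (hk_row t).aemeasurable
            ((hk_row t).aemeasurable.mul (hg.enorm.pow_const p)) hinv (by positivity) (by ring)
      _ ≤ (c ^ (1 - 1 / p) * (∫⁻ r, k t r * ‖g r‖ₑ ^ p ∂μ) ^ (1 / p)) ^ p := by gcongr
      _ = c ^ (p - 1) * ∫⁻ r, k t r * ‖g r‖ₑ ^ p ∂μ := by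
          rw [ENNReal.mul_rpow_of_nonneg _ _ hp0.le, ← ENNReal.rpow_mul, ← ENNReal.rpow_mul,
            one_div_mul_cancel hp0.ne', ENNReal.rpow_one, sub_mul, one_div_mul_cancel hp0.ne',
            one_mul]
  have hmeas : AEMeasurable (fun z : α × α => k z.1 z.2 * ‖g z.2‖ₑ ^ p) (μ.prod μ) :=
    hk.aemeasurable.mul (hg.comp_snd.enorm.pow_const p)
  have hpow : ∫⁻ t, ‖f t‖ₑ ^ p ∂μ ≤ c ^ p * ∫⁻ r, ‖g r‖ₑ ^ p ∂μ := by
    calc ∫⁻ t, ‖f t‖ₑ ^ p ∂μ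
        ≤ ∫⁻ t, c ^ (p - 1) * ∫⁻ r, k t r * ‖g r‖ₑ ^ p ∂μ ∂μ := lintegral_mono_ae hholder
      _ = c ^ (p - 1) * ∫⁻ t, ∫⁻ r, k t r * ‖g r‖ₑ ^ p ∂μ ∂μ :=
          lintegral_const_mul'' _ hmeas.lintegral_prod_right'
      _ = c ^ (p - 1) * ∫⁻ r, ∫⁻ t, k t r * ‖g r‖ₑ ^ p ∂μ ∂μ := by
          rw [lintegral_lintegral_swap hmeas]
      _ = c ^ (p - 1) * ∫⁻ r, (∫⁻ t, k t r ∂μ) * ‖g r‖ₑ ^ p ∂μ := by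
          simp_rw [lintegral_mul_const _ (hk_col _)]
      _ ≤ c ^ (p - 1) * ∫⁻ r, c * ‖g r‖ₑ ^ p ∂μ := by
          gcongr 1
          refine lintegral_mono_ae ?_
          filter_upwards [hcol] with r hr
          gcongr
      _ = c ^ p * ∫⁻ r, ‖g r‖ₑ ^ p ∂μ := by
          rw [lintegral_const_mul'' _ (hg.enorm.pow_const p), ← mul_assoc]
          nth_rewrite 2 [← ENNReal.rpow_one c]
          rw [← ENNReal.rpow_add_of_nonneg _ _ (by linarith) zero_le_one, sub_add_cancel]
  rw [eLpNorm_eq_lintegral_rpow_enorm_toReal hq0 hqtop,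
    eLpNorm_eq_lintegral_rpow_enorm_toReal hq0 hqtop, ← hp]
  calc (∫⁻ t, ‖f t‖ₑ ^ p ∂μ) ^ (1 / p) ≤ (c ^ p * ∫⁻ r, ‖g r‖ₑ ^ p ∂μ) ^ (1 / p) := by gcongr
    _ = c * (∫⁻ r, ‖g r‖ₑ ^ p ∂μ) ^ (1 / p) := by
      rw [ENNReal.mul_rpow_of_nonneg _ _ (by positivity), ← ENNReal.rpow_mul,
        mul_one_div_cancel hp0.ne', ENNReal.rpow_one]

instance : SFinite mulHaar := by
  unfold mulHaar
  infer_instance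

theorem ae_mulHaar_pos : ∀ᵐ t ∂mulHaar, 0 < t :=
  (withDensity_absolutelyContinuous _ _).ae_le (ae_restrict_mem measurableSet_Ioi)

theorem lintegral_mulHaar (f : ℝ → ℝ≥0∞) :
    ∫⁻ t, f t ∂mulHaar = ∫⁻ t in Set.Ioi 0, ENNReal.ofReal t⁻¹ * f t :=
  lintegral_withDensity_eq_lintegral_mul_non_measurable _ (by fun_prop)
    (.of_forall fun _ => ENNReal.ofReal_lt_top) f

/-- The kernel `min(1, r/t) (t/r)ˢ`. -/
def weightKernel (s t r : ℝ) : ℝ≥0∞ := ENNReal.ofReal (min 1 (r / t) * (t / r) ^ s)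

theorem measurable_weightKernel (s : ℝ) : Measurable (Function.uncurry (weightKernel s)) := by
  unfold weightKernel Function.uncurry
  fun_prop

theorem weightKernel_swap {s t r : ℝ} (ht : 0 < t) (hr : 0 < r) :
    weightKernel s t r = weightKernel (1 - s) r t := by
  unfold weightKernel
  congr 1
  have h : min 1 (r / t) = min 1 (t / r) * (r / t) := by
    rw [min_mul_of_nonneg _ _ (by positivity), one_mul, div_mul_div_cancel₀ hr.ne',
      div_self ht.ne', min_comm]
  rw [h, Real.rpow_sub (by positivity), Real.rpow_one, ← inv_div t r,
    Real.inv_rpow (by positivity)]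
  field_simp

theorem lintegral_weightKernel_le {s t : ℝ} (hs0 : 0 < s) (hs1 : s < 1) (ht : 0 < t) :
    ∫⁻ r, weightKernel s t r ∂mulHaar ≤ ENNReal.ofReal (1 / (1 - s) + 1 / s) := by
  have hs1' : 0 < 1 - s := sub_pos.2 hs1
  have hsplit : Set.Ioi (0 : ℝ) = Set.Ioc 0 t ∪ Set.Ioi t := (Set.Ioc_union_Ioi_eq_Ioi ht.le).symm
  rw [lintegral_mulHaar, hsplit, ENNReal.ofReal_add (by positivity) (by positivity)]
  refine (lintegral_union_le _ _ _).trans (add_le_add ?_ ?_)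
  · have hint : IntegrableOn (fun r : ℝ => t ^ (s - 1) * r ^ (-s)) (Set.Ioc 0 t) := by
      rw [← intervalIntegrable_iff_integrableOn_Ioc_of_le ht.le]
      exact (intervalIntegral.intervalIntegrable_rpow' (by linarith)).const_mul _
    calc ∫⁻ r in Set.Ioc 0 t, ENNReal.ofReal r⁻¹ * weightKernel s t r
        ≤ ∫⁻ r in Set.Ioc 0 t, ENNReal.ofReal (t ^ (s - 1) * r ^ (-s)) := by
          refine setLIntegral_mono' measurableSet_Ioc fun r hr => ?_
          have hr0 : 0 < r := hr.1
          rw [weightKernel, ← ENNReal.ofReal_mul (by positivity)]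
          refine ENNReal.ofReal_le_ofReal ?_
          calc r⁻¹ * (min 1 (r / t) * (t / r) ^ s) ≤ r⁻¹ * (r / t * (t / r) ^ s) := by
                gcongr
                exact min_le_right _ _
            _ = t ^ (s - 1) * r ^ (-s) := by
                rw [Real.div_rpow ht.le hr0.le, Real.rpow_sub ht, Real.rpow_neg hr0.le,
                  Real.rpow_one]
                field_simp
      _ = ENNReal.ofReal (1 / (1 - s)) := by
          rw [← ofReal_integral_eq_lintegral_ofReal hint]
          · congr 1
            rw [← intervalIntegral.integral_of_le ht.le, intervalIntegral.integral_const_mul,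
              integral_rpow (.inl (by linarith)), Real.zero_rpow (by linarith), sub_zero,
              neg_add_eq_sub, mul_div_assoc', ← Real.rpow_add ht]
            simp
          · filter_upwards [ae_restrict_mem measurableSet_Ioc] with r hr
            have hr0 : 0 < r := hr.1
            positivity
  · have hint : IntegrableOn (fun r : ℝ => t ^ s * r ^ (-s - 1)) (Set.Ioi t) :=
      (integrableOn_Ioi_rpow_of_lt (by linarith) ht).const_mul _
    calc ∫⁻ r in Set.Ioi t, ENNReal.ofReal r⁻¹ * weightKernel s t r
        ≤ ∫⁻ r in Set.Ioi t, ENNReal.ofReal (t ^ s * r ^ (-s - 1)) := by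
          refine setLIntegral_mono' measurableSet_Ioi fun r hr => ?_
          have hr0 : 0 < r := ht.trans hr
          rw [weightKernel, ← ENNReal.ofReal_mul (by positivity)]
          refine ENNReal.ofReal_le_ofReal ?_
          calc r⁻¹ * (min 1 (r / t) * (t / r) ^ s) ≤ r⁻¹ * (1 * (t / r) ^ s) := by
                gcongr
                exact min_le_left _ _
            _ = t ^ s * r ^ (-s - 1) := by
                rw [Real.div_rpow ht.le hr0.le, Real.rpow_sub hr0, Real.rpow_neg hr0.le,
                  Real.rpow_one]
                field_simp
      _ = ENNReal.ofReal (1 / s) := by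
          rw [← ofReal_integral_eq_lintegral_ofReal hint]
          · congr 1
            rw [integral_const_mul, integral_Ioi_rpow_of_lt (by linarith) ht, sub_add_cancel,
              neg_div_neg_eq, mul_div_assoc', ← Real.rpow_add ht]
            simp
          · filter_upwards [ae_restrict_mem measurableSet_Ioi] with r hr
            have hr0 : 0 < r := ht.trans hr
            positivity

namespace IsBAS

variable {D : Set X} {S : X → X} {T : ℝ → X →L[ℝ] X} {M C₀ : ℝ}

omit [CompleteSpace X] in
theorem add_apply (h : IsBAS D S T M C₀) {t s : ℝ} (ht : 0 ≤ t) (hs : 0 ≤ s) (x : X) :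
    T (t + s) x = T t (T s x) := by
  rw [h.T_semigroup t ht s hs, ContinuousLinearMap.comp_apply]

omit [CompleteSpace X] in
theorem apply_eq_sub (h : IsBAS D S T M C₀) {t s : ℝ} (hs : 0 ≤ s) (hst : s ≤ t) (x : X) :
    T t x = T (t - s) (T s x) := by
  rw [← h.add_apply (sub_nonneg.2 hst) hs, sub_add_cancel]

omit [CompleteSpace X] in
theorem hasDerivAt (h : IsBAS D S T M C₀) (x : X) {t : ℝ} (ht : 0 < t) :
    HasDerivAt (fun τ => T τ x) (S (T t x)) t := by
  have hmem := h.analytic_mem x (t / 2) (half_pos ht)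
  have hsub : 0 < t - t / 2 := by linarith
  have hd : HasDerivAt (fun τ => T τ (T (t / 2) x)) (S (T t x)) (t - t / 2) := by
    rw [h.apply_eq_sub (half_pos ht).le (half_le_self ht.le), h.T_comm _ hmem _ hsub.le]
    exact (h.T_deriv _ hmem _ hsub.le).hasDerivAt (Ici_mem_nhds hsub)
  refine (hd.comp_sub_const t (t / 2)).congr_of_eventuallyEq ?_
  filter_upwards [Ici_mem_nhds (half_lt_self ht)] with τ hτ
  exact h.apply_eq_sub (half_pos ht).le hτ x

omit [CompleteSpace X] in
theorem continuousOn_generator (h : IsBAS D S T M C₀) (x : X) :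
    ContinuousOn (fun t => S (T t x)) (Set.Ioi 0) := by
  intro t ht
  have ht : 0 < t := ht
  have hmem := h.analytic_mem x (t / 2) (half_pos ht)
  have hsub : 0 < t - t / 2 := by linarith
  have hc : ContinuousAt (fun τ => T (τ - t / 2) (S (T (t / 2) x))) t :=
    ContinuousAt.comp (f := fun τ : ℝ => τ - t / 2) (g := fun τ => T τ (S (T (t / 2) x)))
      ((h.T_cont _).continuousAt (Ici_mem_nhds hsub)) (by fun_prop)
  refine (hc.congr ?_).continuousWithinAt
  filter_upwards [Ici_mem_nhds (half_lt_self ht)] with τ hτ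
  rw [h.apply_eq_sub (half_pos ht).le hτ x, h.T_comm _ hmem _ (sub_nonneg.2 hτ)]

end IsBAS

variable {D : Set X} {A : X → X} {B : X →L[ℝ] X} {TA TS : ℝ → X →L[ℝ] X} {MA CA MS CS : ℝ}

omit [CompleteSpace X] in
theorem norm_semigroup_comp_generator_le (hA : IsBAS D A TA MA CA)
    (hS : IsBAS D (fun x => B (A x)) TS MS CS) (y : X) {t r : ℝ} (ht : 0 < t) (hr : 0 < r) :
    ‖TS t (B (A (TA (2 * r) y)))‖ ≤
      (|CS| * |MA| + |MS| * ‖B‖ * |CA|) * (min 1 (r / t) * r⁻¹ * ‖TA r y‖) := by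
  have hdouble : TA (2 * r) y = TA r (TA r y) := by rw [two_mul, hA.add_apply hr.le hr.le]
  have hmem : TA (2 * r) y ∈ D := hA.analytic_mem y _ (by positivity)
  have hle_t : ‖TS t (B (A (TA (2 * r) y)))‖ ≤ |CS| * |MA| * (t⁻¹ * ‖TA r y‖) := by
    rw [← hS.T_comm _ hmem t ht.le]
    calc ‖B (A (TS t (TA (2 * r) y)))‖
        = t⁻¹ * (t * ‖B (A (TS t (TA (2 * r) y)))‖) := by field_simp
      _ ≤ t⁻¹ * (CS * ‖TA (2 * r) y‖) := by
          exact mul_le_mul_of_nonneg_left (hS.analytic_bdd _ t ht) (inv_nonneg.2 ht.le)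
      _ ≤ t⁻¹ * (|CS| * (|MA| * ‖TA r y‖)) := by
          rw [hdouble]
          gcongr
          · exact le_abs_self _
          · refine (hA.T_bdd r hr.le _).trans ?_
            gcongr
            exact le_abs_self _
      _ = |CS| * |MA| * (t⁻¹ * ‖TA r y‖) := by ring
  have hle_r : ‖TS t (B (A (TA (2 * r) y)))‖ ≤ |MS| * ‖B‖ * |CA| * (r⁻¹ * ‖TA r y‖) := by
    have hgen : ‖A (TA (2 * r) y)‖ ≤ r⁻¹ * (|CA| * ‖TA r y‖) := by
      rw [hdouble, inv_mul_eq_div, le_div_iff₀' hr]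
      refine (hA.analytic_bdd _ r hr).trans ?_
      gcongr
      exact le_abs_self _
    calc ‖TS t (B (A (TA (2 * r) y)))‖ ≤ MS * ‖B (A (TA (2 * r) y))‖ := hS.T_bdd t ht.le _
      _ ≤ |MS| * (‖B‖ * (r⁻¹ * (|CA| * ‖TA r y‖))) := by
          gcongr
          · exact le_abs_self _
          · exact B.le_opNorm_of_le hgen
      _ = |MS| * ‖B‖ * |CA| * (r⁻¹ * ‖TA r y‖) := by ring
  rcases min_cases 1 (r / t) with ⟨hmin, -⟩ | ⟨hmin, -⟩ <;> rw [hmin]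
  · rw [one_mul]
    refine hle_r.trans ?_
    gcongr
    exact le_add_of_nonneg_left (by positivity)
  · rw [div_mul_eq_mul_div, mul_inv_cancel₀ hr.ne', one_div]
    refine hle_t.trans ?_
    gcongr
    exact le_add_of_nonneg_right (by positivity)

theorem enorm_semigroup_le_lintegral (hA : IsBAS D A TA MA CA)
    (hAdecay : ∀ x : X, Filter.Tendsto (fun t => ‖TA t x‖) Filter.atTop (nhds 0))
    (hS : IsBAS D (fun x => B (A x)) TS MS CS) (y : X) {t : ℝ} (ht : 0 < t) :
    ‖TS t (B y)‖ₑ ≤ ∫⁻ r in Set.Ioi 0, ENNReal.ofReal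
      (2 * (|CS| * |MA| + |MS| * ‖B‖ * |CA|) * (min 1 (r / t) * r⁻¹ * ‖TA r y‖)) := by
  set L := ∫⁻ r in Set.Ioi 0, ENNReal.ofReal
    (2 * (|CS| * |MA| + |MS| * ‖B‖ * |CA|) * (min 1 (r / t) * r⁻¹ * ‖TA r y‖))
  set P : X →L[ℝ] X := (TS t).comp B
  set φ : ℝ → X := fun r => P (TA (2 * r) y)
  set φ' : ℝ → X := fun r => (2 : ℝ) • P (A (TA (2 * r) y))
  have hderiv {r : ℝ} (hr : 0 < r) : HasDerivAt φ (φ' r) r := by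
    have hscale : HasDerivAt (fun r : ℝ => 2 * r) 2 r := by
      simpa using (hasDerivAt_id r).const_mul (2 : ℝ)
    have hcomp := (hA.hasDerivAt y (show 0 < 2 * r by positivity)).scomp r hscale
    simpa [φ, φ', Function.comp_def] using P.hasFDerivAt.comp_hasDerivAt r hcomp
  have hgen : ContinuousOn (fun r : ℝ => A (TA (2 * r) y)) (Set.Ioi 0) :=
    (hA.continuousOn_generator y).comp (f := fun r : ℝ => 2 * r) (by fun_prop)
      fun r (hr : 0 < r) => show 0 < 2 * r by positivity
  have hcont : ContinuousOn φ' (Set.Ioi 0) :=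
    (P.continuous.comp_continuousOn hgen).const_smul (2 : ℝ)
  have hdiff {a b : ℝ} (ha : 0 < a) (hab : a ≤ b) : ‖φ b - φ a‖ₑ ≤ L := by
    have hpos : Set.uIcc a b ⊆ Set.Ioi 0 := by
      rw [Set.uIcc_of_le hab]
      exact fun r hr => ha.trans_le hr.1
    rw [← intervalIntegral.integral_eq_sub_of_hasDerivAt (fun r hr => hderiv (hpos hr))
      (hcont.mono hpos).intervalIntegrable, intervalIntegral.integral_of_le hab]
    refine (enorm_integral_le_lintegral_enorm _).trans
      ((lintegral_mono_set fun r hr => ha.trans hr.1).trans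
        (setLIntegral_mono' measurableSet_Ioi fun r hr => ?_))
    rw [← ofReal_norm]
    refine ENNReal.ofReal_le_ofReal ?_
    rw [norm_smul, Real.norm_two, mul_assoc]
    gcongr
    exact norm_semigroup_comp_generator_le hA hS y ht hr
  have hatTop : Filter.Tendsto φ Filter.atTop (nhds 0) := by
    have hTA : Filter.Tendsto (fun r : ℝ => TA (2 * r) y) Filter.atTop (nhds 0) :=
      (tendsto_zero_iff_norm_tendsto_zero.2 (hAdecay y)).comp
        (Filter.tendsto_id.const_mul_atTop two_pos)
    simpa [φ, Function.comp_def] using (P.continuous.tendsto 0).comp hTA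
  have hzero : Filter.Tendsto φ (nhdsWithin 0 (Set.Ioi 0)) (nhds (TS t (B y))) := by
    have hφ : ContinuousOn φ (Set.Ici 0) :=
      P.continuous.comp_continuousOn ((hA.T_cont y).comp (by fun_prop)
        fun r (hr : 0 ≤ r) => show 0 ≤ 2 * r by positivity)
    have hφ0 := (hφ 0 Set.self_mem_Ici).mono_left (nhdsWithin_mono 0 Set.Ioi_subset_Ici_self)
    simpa [φ, P, hA.T_zero] using hφ0
  refine le_of_tendsto hzero.enorm ?_
  filter_upwards [self_mem_nhdsWithin] with a ha
  have hlim := (hatTop.sub_const (φ a)).enorm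
  rw [zero_sub, enorm_neg] at hlim
  refine le_of_tendsto hlim ?_
  filter_upwards [Filter.eventually_ge_atTop a] with b hab
  exact hdiff ha hab

theorem eLpNorm_semigroup_le (hA : IsBAS D A TA MA CA)
    (hAdecay : ∀ x : X, Filter.Tendsto (fun t => ‖TA t x‖) Filter.atTop (nhds 0))
    (hS : IsBAS D (fun x => B (A x)) TS MS CS) {s : ℝ} (hs0 : 0 < s) (hs1 : s < 1)
    {q : ℝ≥0∞} (hq : 1 ≤ q) :
    ∃ C : ℝ, 0 < C ∧ ∀ y : X, eLpNorm (fun t : ℝ => t ^ s * ‖TS t (B y)‖) q mulHaar ≤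
      ENNReal.ofReal C * eLpNorm (fun t : ℝ => t ^ s * ‖TA t y‖) q mulHaar := by
  set K : ℝ := 2 * (|CS| * |MA| + |MS| * ‖B‖ * |CA|)
  have hK : 0 ≤ K := by positivity
  have hs1' : 0 < 1 - s := sub_pos.2 hs1
  set N : ℝ := 1 / (1 - s) + 1 / s
  have hN : 0 < N := by positivity
  refine ⟨K * N + 1, by positivity, fun y => ?_⟩
  have hle : ENNReal.ofReal (K * N) ≤ ENNReal.ofReal (K * N + 1) :=
    ENNReal.ofReal_le_ofReal (by linarith)
  refine (eLpNorm_le_of_kernel_bound (k := fun t r => ENNReal.ofReal K * weightKernel s t r)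
    ((measurable_weightKernel s).const_mul _) ?_ ?_ ?_ ?_ hq).trans (mul_le_mul_left hle _)
  · filter_upwards [ae_mulHaar_pos] with t ht
    rw [lintegral_const_mul' _ _ ENNReal.ofReal_ne_top, ENNReal.ofReal_mul hK]
    gcongr
    exact lintegral_weightKernel_le hs0 hs1 ht
  · filter_upwards [ae_mulHaar_pos] with r hr
    rw [lintegral_const_mul' _ _ ENNReal.ofReal_ne_top, ENNReal.ofReal_mul hK]
    gcongr
    calc ∫⁻ t, weightKernel s t r ∂mulHaar = ∫⁻ t, weightKernel (1 - s) r t ∂mulHaar := by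
          refine lintegral_congr_ae ?_
          filter_upwards [ae_mulHaar_pos] with t ht
          exact weightKernel_swap ht hr
      _ ≤ ENNReal.ofReal (1 / (1 - (1 - s)) + 1 / (1 - s)) :=
          lintegral_weightKernel_le hs1' (by linarith) hr
      _ = ENNReal.ofReal N := by rw [sub_sub_cancel, add_comm]
  · have hcont : ContinuousOn (fun t : ℝ => t ^ s * ‖TA t y‖) (Set.Ioi 0) :=
      (Real.continuous_rpow_const hs0.le).continuousOn.mul
        ((hA.T_cont y).mono Set.Ioi_subset_Ici_self).norm
    exact (hcont.aestronglyMeasurable measurableSet_Ioi).mono_ac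
      (withDensity_absolutelyContinuous _ _)
  · filter_upwards [ae_mulHaar_pos] with t ht
    rw [lintegral_mulHaar]
    calc ‖t ^ s * ‖TS t (B y)‖‖ₑ = ENNReal.ofReal (t ^ s) * ‖TS t (B y)‖ₑ := by
          rw [enorm_mul, enorm_norm, Real.enorm_of_nonneg (by positivity)]
      _ ≤ ENNReal.ofReal (t ^ s) * ∫⁻ r in Set.Ioi 0,
            ENNReal.ofReal (K * (min 1 (r / t) * r⁻¹ * ‖TA r y‖)) := by
          gcongr
          exact enorm_semigroup_le_lintegral hA hAdecay hS y ht
      _ = ∫⁻ r in Set.Ioi 0, ENNReal.ofReal (t ^ s) *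
            ENNReal.ofReal (K * (min 1 (r / t) * r⁻¹ * ‖TA r y‖)) :=
          (lintegral_const_mul' _ _ ENNReal.ofReal_ne_top).symm
      _ = _ := by
          refine setLIntegral_congr_fun measurableSet_Ioi fun r (hr : 0 < r) => ?_
          have hmin : 0 ≤ min 1 (r / t) := by positivity
          rw [weightKernel, Real.enorm_of_nonneg (by positivity), ← ENNReal.ofReal_mul hK,
            ← ENNReal.ofReal_mul (by positivity), ← ENNReal.ofReal_mul (by positivity),
            ← ENNReal.ofReal_mul (by positivity), Real.div_rpow ht.le hr.le]
          congr 1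
          field_simp

/-- Equivalence of Besov-type norms with negative regularity for a composite
operator: if `A` generates a decaying bounded analytic semigroup `T_A`, `B` is a
continuous linear bijection with continuous inverse, and `S = B∘A` (with the same
domain) generates a decaying bounded analytic semigroup `T_S`, then for all
`s ∈ (0,1)`, `q ∈ [1,∞]` the norms `‖tˢ‖T_S(t)x‖‖_{L^q(dt/t)}` and
`‖tˢ‖T_A(t)B⁻¹x‖‖_{L^q(dt/t)}` are equivalent, uniformly in `x`. -/
theorem equiv_norms_negative_regularity
    (DA : Set X) (A : X → X) (B : X ≃L[ℝ] X)
    (TA TS : ℝ → X →L[ℝ] X) (MA CA MS CS : ℝ)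
    (hA : IsBAS DA A TA MA CA)
    (hAdecay : ∀ x : X, Filter.Tendsto (fun t => ‖TA t x‖) Filter.atTop (nhds 0))
    (hS : IsBAS DA (fun x => B (A x)) TS MS CS)
    (hSdecay : ∀ x : X, Filter.Tendsto (fun t => ‖TS t x‖) Filter.atTop (nhds 0))
    (s : ℝ) (hs0 : 0 < s) (hs1 : s < 1) (q : ℝ≥0∞) (hq : 1 ≤ q) :
    ∃ c : ℝ, 0 < c ∧ ∃ C : ℝ, 0 < C ∧ ∀ x : X,
      ENNReal.ofReal c *
          eLpNorm (fun t : ℝ => t ^ s * ‖TA t (B.symm x)‖) q mulHaar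
        ≤ eLpNorm (fun t : ℝ => t ^ s * ‖TS t x‖) q mulHaar ∧
      eLpNorm (fun t : ℝ => t ^ s * ‖TS t x‖) q mulHaar
        ≤ ENNReal.ofReal C *
            eLpNorm (fun t : ℝ => t ^ s * ‖TA t (B.symm x)‖) q mulHaar := by
  obtain ⟨C, hC, hle⟩ := eLpNorm_semigroup_le (B := (B : X →L[ℝ] X)) hA hAdecay hS hs0 hs1 hq
  have hA' : IsBAS DA (fun x => (B.symm : X →L[ℝ] X) (B (A x))) TA MA CA := by
    simpa using hA
  obtain ⟨C', hC', hge⟩ := eLpNorm_semigroup_le hS hSdecay hA' hs0 hs1 hq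
  refine ⟨C'⁻¹, inv_pos.2 hC', C, hC, fun x => ⟨?_, by simpa using hle (B.symm x)⟩⟩
  rw [ENNReal.ofReal_inv_of_pos hC', ENNReal.inv_mul_le_iff (ENNReal.ofReal_pos.2 hC').ne'
    ENNReal.ofReal_ne_top]
  exact hge x
end
end
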